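/- arXiv:1004.3411 — 3 statements merged into one kernel-verified Lean document; each statement's English description precedes it below -/
import Mathlib

section
/- Let n > 2 and G = (ℤ/nℤ)*. For x ∈ (1/n)ℤ/ℤ define the Stickelberger element S(x) = ∑_{g ∈ G} B₁(g·x)·σ_g in the group algebra ℂ[G]. Let U be the ℂ-span of all S(x). Then the dimension of U equals φ(n)/2. -/
open Classical in
/-- The first periodic Bernoulli function. -/
noncomputable def B1 (x : ℝ) : ℝ := if ∃ m : ℤ, x = (m : ℝ) then 0 else Int.fract x - 1/2

open Classical in
/-- The Stickelberger element `S(t/n) = ∑_{g ∈ (ℤ/n)ˣ} B₁(g·t/n)·σ_g` in `ℂ[(ℤ/n)ˣ]`. -/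
noncomputable def stickelberger (n : ℕ) [NeZero n] (t : ZMod n) :
    MonoidAlgebra ℂ (ZMod n)ˣ :=
  ∑ g : (ZMod n)ˣ,
    MonoidAlgebra.single g
      ((B1 ((((g : ZMod n).val * t.val : ℕ) : ℝ) / (n : ℝ)) : ℝ) : ℂ)

open Filter Topology Complex in
/-- `π cot(πa)` as a limit of symmetric partial sums. -/
theorem tendsto_sum_inv_sub_inv_cot {a : ℝ} (ha : a ∈ Set.Ioo (0 : ℝ) 1) :
    Tendsto (fun M : ℕ => ∑ k ∈ Finset.range M, (1 / ((k : ℂ) + a) - 1 / ((k : ℂ) + 1 - a)))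
      atTop (𝓝 (Real.pi * cot (Real.pi * a))) := by
  have hmem : (a : ℂ) ∈ integerComplement := by
    rintro ⟨m, hm⟩
    have hm' : (m : ℝ) = a := by exact_mod_cast hm
    have h0 : (0 : ℝ) < m := hm' ▸ ha.1
    have h1 : (m : ℝ) < 1 := hm' ▸ ha.2
    have h0' : 0 < m := by exact_mod_cast h0
    have h1' : m < 1 := by exact_mod_cast h1
    omega
  have hzero : Tendsto (fun M : ℕ => 1 / ((M : ℂ) + a)) atTop (𝓝 0) := by
    have hr : Tendsto (fun M : ℕ => 1 / ((M : ℝ) + a)) atTop (𝓝 0) :=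
      (tendsto_const_nhds (x := (1 : ℝ))).div_atTop
        (tendsto_atTop_add_const_right _ _ tendsto_natCast_atTop_atTop)
    simpa [Function.comp_def] using (continuous_ofReal.tendsto 0).comp hr
  have key : ∀ M : ℕ, ∑ k ∈ Finset.range M, (1 / ((k : ℂ) + a) - 1 / ((k : ℂ) + 1 - a))
      = ∑ j ∈ Finset.range M, cotTerm a j + 1 / (a : ℂ) - 1 / ((M : ℂ) + a) := by
    intro M
    induction M with
    | zero => simp
    | succ M ih =>
      rw [Finset.sum_range_succ, Finset.sum_range_succ, ih, cotTerm]
      rw [show (a : ℂ) - (M + 1) = -((M : ℂ) + 1 - a) by ring, one_div_neg_eq_neg_one_div]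
      push_cast
      ring
  simp_rw [key]
  have := ((tendsto_logDeriv_euler_cot_sub hmem).add_const (1 / (a : ℂ))).sub hzero
  simpa using this

theorem abs_one_div_rpow_sub_one_div_rpow_le {c x y s : ℝ} (hc : 0 < c) (hx : x ∈ Set.Icc c (c + 1))
    (hy : y ∈ Set.Icc c (c + 1)) (hs : s ∈ Set.Icc (1 : ℝ) 2) :
    |1 / x ^ s - 1 / y ^ s| ≤ 1 / c ^ s * (2 / (c + 1)) := by
  have hs0 : 0 ≤ s := by linarith [hs.1]
  have hbd : ∀ z ∈ Set.Icc c (c + 1), 1 / z ^ s ∈ Set.Icc (1 / (c + 1) ^ s) (1 / c ^ s) := by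
    intro z hz
    have hz0 : 0 < z := hc.trans_le hz.1
    exact ⟨one_div_le_one_div_of_le (by positivity) (Real.rpow_le_rpow hz0.le hz.2 hs0),
      one_div_le_one_div_of_le (by positivity) (Real.rpow_le_rpow hc.le hz.1 hs0)⟩
  have hgap : 1 / c ^ s - 1 / (c + 1) ^ s ≤ 1 / c ^ s * (2 / (c + 1)) := by
    have hr : (c / (c + 1)) ^ (2 : ℝ) ≤ (c / (c + 1)) ^ s :=
      Real.rpow_le_rpow_of_exponent_ge (by positivity)
        (by rw [div_le_one (by positivity)]; linarith) hs.2
    rw [Real.rpow_two, Real.div_rpow hc.le (by positivity)] at hr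
    have hfac : 1 / c ^ s - 1 / (c + 1) ^ s = 1 / c ^ s * (1 - c ^ s / (c + 1) ^ s) := by
      have := (Real.rpow_pos_of_pos hc s).ne'
      field_simp
    rw [hfac]
    gcongr
    have hsub : c / (c + 1) = 1 - 1 / (c + 1) := by field_simp; ring
    have hdbl : 2 / (c + 1) = 2 * (1 / (c + 1)) := by ring
    nlinarith [sq_nonneg (1 / (c + 1))]
  have h1 := hbd x hx
  have h2 := hbd y hy
  rw [abs_le]
  constructor <;> linarith [h1.1, h1.2, h2.1, h2.2]

open Filter Topology Complex in
/-- The value at `1` of the odd Hurwitz zeta function, by dominated convergence as `s → 1⁺`. -/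
theorem hurwitzZetaOdd_one {a : ℝ} (ha : a ∈ Set.Ioo (0 : ℝ) 1) :
    HurwitzZeta.hurwitzZetaOdd a 1 = Real.pi / 2 * cot (Real.pi * a) := by
  let f : ℝ → ℕ → ℝ := fun s k => (1 / (k + a) ^ s - 1 / (k + 1 - a) ^ s) / 2
  obtain ⟨m, hm0, hma, hma'⟩ : ∃ m : ℝ, 0 < m ∧ m ≤ a ∧ m ≤ 1 - a :=
    ⟨min a (1 - a), lt_min ha.1 (by linarith [ha.2]), min_le_left _ _, min_le_right _ _⟩
  have hm1 : m ≤ 1 := by linarith [ha.2]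
  let bound : ℕ → ℝ := fun k => m⁻¹ ^ 2 * (1 / ((k + 1 : ℕ) : ℝ) ^ 2)
  have hsum : Summable bound :=
    ((summable_nat_add_iff 1).mpr (Real.summable_one_div_nat_pow.mpr one_lt_two)).mul_left _
  have hbound : ∀ s ∈ Set.Icc (1 : ℝ) 2, ∀ k, ‖f s k‖ ≤ bound k := by
    intro s hs k
    have hk : (0 : ℝ) ≤ k := k.cast_nonneg
    have h := abs_one_div_rpow_sub_one_div_rpow_le (c := k + m) (x := k + a) (y := k + 1 - a) (s := s)
      (by positivity) ⟨by linarith, by linarith [ha.2]⟩ ⟨by linarith, by linarith [ha.1]⟩ hs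
    have hle : m * (k + 1) ≤ k + m := by nlinarith
    have hpow : 1 / (k + m) ^ s ≤ m⁻¹ ^ 2 * (1 / ((k : ℝ) + 1)) := by
      have h1 : m ^ 2 * (k + 1) ≤ (m * (k + 1)) ^ s := by
        rw [Real.mul_rpow hm0.le (by positivity)]
        gcongr
        · rw [← Real.rpow_two]
          exact Real.rpow_le_rpow_of_exponent_ge hm0 hm1 hs.2
        · exact Real.self_le_rpow_of_one_le (by linarith) hs.1
      have h2 : (m * (k + 1)) ^ s ≤ (k + m) ^ s :=
        Real.rpow_le_rpow (by positivity) hle (by linarith [hs.1])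
      calc 1 / (k + m) ^ s ≤ 1 / (m ^ 2 * (k + 1)) :=
            one_div_le_one_div_of_le (by positivity) (h1.trans h2)
        _ = _ := by field_simp
    simp only [f, bound, Real.norm_eq_abs, abs_div, abs_two]
    calc _ ≤ 1 / (k + m) ^ s * (2 / (k + m + 1)) / 2 := by gcongr
      _ ≤ m⁻¹ ^ 2 * (1 / ((k : ℝ) + 1)) * (2 / (k + 1)) / 2 := by
        gcongr
        linarith
      _ = _ := by push_cast; field_simp
  have hzeta : ∀ s ∈ Set.Ioo (1 : ℝ) 2,
      HurwitzZeta.hurwitzZetaOdd a s = ((∑' k, f s k : ℝ) : ℂ) := by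
    intro s hs
    rw [ofReal_tsum]
    rw [← (HurwitzZeta.hasSum_nat_hurwitzZetaOdd_of_mem_Icc ⟨ha.1.le, ha.2.le⟩
      (by simpa using hs.1 : 1 < (s : ℂ).re)).tsum_eq]
    refine tsum_congr fun k => ?_
    have hk : (0 : ℝ) ≤ k := k.cast_nonneg
    simp only [f]
    push_cast [ofReal_cpow (by linarith [ha.1] : (0 : ℝ) ≤ k + a),
      ofReal_cpow (by linarith [ha.2] : (0 : ℝ) ≤ k + 1 - a)]
    rfl
  have hIoo : ∀ᶠ s in 𝓝[>] (1 : ℝ), s ∈ Set.Ioo (1 : ℝ) 2 := Ioo_mem_nhdsGT one_lt_two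
  have hlim : Tendsto (fun s => ∑' k, f s k) (𝓝[>] 1) (𝓝 (∑' k, f 1 k)) := by
    refine tendsto_tsum_of_dominated_convergence hsum (fun k => ?_) ?_
    · refine Tendsto.mono_left ?_ nhdsWithin_le_nhds
      have hk : (0 : ℝ) ≤ k := k.cast_nonneg
      have h1 : 0 < k + a := by linarith [ha.1]
      have h2 : 0 < k + 1 - a := by linarith [ha.2]
      have : ContinuousAt (fun s : ℝ => f s k) 1 := by
        refine ((continuousAt_const.div (Real.continuousAt_const_rpow h1.ne') ?_).sub
          (continuousAt_const.div (Real.continuousAt_const_rpow h2.ne') ?_)).div_const _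
        · simpa using h1.ne'
        · simpa using h2.ne'
      exact this
    · filter_upwards [hIoo] with s hs k using hbound s ⟨hs.1.le, hs.2.le⟩ k
  have hlim' : Tendsto (fun s : ℝ => HurwitzZeta.hurwitzZetaOdd a s) (𝓝[>] 1)
      (𝓝 (HurwitzZeta.hurwitzZetaOdd a 1)) := by
    have := ((HurwitzZeta.differentiable_hurwitzZetaOdd a).continuous.comp continuous_ofReal).tendsto
      (1 : ℝ)
    simpa [Function.comp_def] using this.mono_left nhdsWithin_le_nhds
  have hval : HurwitzZeta.hurwitzZetaOdd a 1 = ((∑' k, f 1 k : ℝ) : ℂ) := by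
    refine tendsto_nhds_unique hlim' (((continuous_ofReal.tendsto _).comp hlim).congr' ?_)
    filter_upwards [hIoo] with s hs using (hzeta s hs).symm
  have hs1 : HasSum (fun k => ((f 1 k : ℝ) : ℂ)) (HurwitzZeta.hurwitzZetaOdd a 1) := by
    rw [hval]
    exact_mod_cast (Summable.of_norm_bounded hsum
      (hbound 1 ⟨le_rfl, one_le_two⟩)).hasSum
  refine tendsto_nhds_unique hs1.tendsto_sum_nat ?_
  have := (tendsto_sum_inv_sub_inv_cot ha).div_const 2
  rw [show Real.pi / 2 * cot (Real.pi * a) = Real.pi * cot (Real.pi * a) / 2 by ring]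
  refine this.congr fun M => ?_
  rw [Finset.sum_div]
  refine Finset.sum_congr rfl fun k _ => ?_
  simp [f]

/-- The first periodic Bernoulli function on `(1/n)ℤ/ℤ`, as a function on `ℤ/n`. -/
noncomputable def sawtooth (n : ℕ) (a : ZMod n) : ℂ :=
  if a = 0 then 0 else (a.val : ℂ) / n - 1 / 2

theorem B1_natCast_div (n : ℕ) [NeZero n] (k : ℕ) :
    ((B1 ((k : ℝ) / n) : ℝ) : ℂ) = sawtooth n k := by
  have hn : (n : ℝ) ≠ 0 := NeZero.ne _
  have hiff : (∃ m : ℤ, (k : ℝ) / n = m) ↔ (k : ZMod n) = 0 := by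
    rw [ZMod.natCast_eq_zero_iff, ← Int.natCast_dvd_natCast]
    constructor
    · rintro ⟨m, hm⟩
      rw [div_eq_iff hn] at hm
      exact ⟨m, by rw [mul_comm]; exact_mod_cast hm⟩
    · rintro ⟨m, hm⟩
      refine ⟨m, ?_⟩
      rw [div_eq_iff hn, mul_comm]
      exact_mod_cast hm
  unfold B1 sawtooth
  by_cases h : (k : ZMod n) = 0
  · rw [if_pos (hiff.mpr h), if_pos h, Complex.ofReal_zero]
  · rw [if_neg (hiff.not.mpr h), if_neg h, Int.fract_div_natCast_eq_div_natCast_mod, ZMod.val_natCast]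
    push_cast
    rfl

theorem sawtooth_neg (n : ℕ) [NeZero n] (a : ZMod n) : sawtooth n (-a) = -sawtooth n a := by
  have hn : (n : ℂ) ≠ 0 := NeZero.ne _
  by_cases h : a = 0
  · simp [sawtooth, h]
  · have : NeZero a := ⟨h⟩
    rw [sawtooth, sawtooth, if_neg (neg_ne_zero.mpr h), if_neg h, ZMod.val_neg_of_ne_zero,
      Nat.cast_sub a.val_lt.le]
    field_simp
    ring

theorem sawtooth_unit_ne_zero {n : ℕ} [NeZero n] (hn : 2 < n) (g : (ZMod n)ˣ) :
    sawtooth n g ≠ 0 := by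
  have : Fact (1 < n) := ⟨by omega⟩
  have hn0 : (n : ℂ) ≠ 0 := NeZero.ne _
  rw [sawtooth, if_neg g.ne_zero]
  intro h
  have h2 : (2 : ℂ) * ((g : ZMod n).val : ℂ) = n := by
    field_simp at h
    linear_combination h
  have h3 : 2 * (g : ZMod n).val = n := by exact_mod_cast h2
  have h4 : (2 : ZMod n) * g = 0 := by
    have := congrArg (Nat.cast : ℕ → ZMod n) h3
    simpa using this
  have h5 : ((2 : ℕ) : ZMod n) = 0 := by
    simpa using (Units.mul_left_eq_zero g).mp h4
  rw [ZMod.natCast_eq_zero_iff] at h5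
  exact absurd (Nat.le_of_dvd two_pos h5) (by omega)

theorem sawtooth_sub_one_sub {n : ℕ} [NeZero n] (hn : 1 < n) (a : ZMod n) :
    sawtooth n (a - 1) - sawtooth n a =
      -(1 / (n : ℂ)) + (if a = 0 then 1 / 2 else 0) + if a = 1 then 1 / 2 else 0 := by
  have : Fact (1 < n) := ⟨hn⟩
  have hn0 : (n : ℂ) ≠ 0 := NeZero.ne _
  have hone : (1 : ZMod n).val = 1 := ZMod.val_one n
  have h1 : sawtooth n 1 = 1 / n - 1 / 2 := by
    rw [sawtooth, if_neg one_ne_zero, hone, Nat.cast_one]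
  have h0 : sawtooth n 0 = 0 := if_pos rfl
  by_cases ha0 : a = 0
  · subst ha0
    rw [zero_sub, sawtooth_neg, h1, h0]
    simp
    ring
  by_cases ha1 : a = 1
  · subst ha1
    rw [sub_self, h1, h0]
    simp
    ring
  have hpos : 1 ≤ a.val := Nat.one_le_iff_ne_zero.mpr ((ZMod.val_ne_zero a).mpr ha0)
  rw [if_neg ha0, if_neg ha1, sawtooth, sawtooth, if_neg (sub_ne_zero.mpr ha1), if_neg ha0,
    ZMod.val_sub (by rwa [hone]), hone, Nat.cast_sub hpos]
  field_simp
  ring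

/-- The finite Fourier expansion of the cotangent. -/
theorem cot_eq_sum_sawtooth {n : ℕ} [NeZero n] (hn : 1 < n) {j : ZMod n} (hj : j ≠ 0) :
    Complex.cot (Real.pi * ((j.val / n : ℝ) : ℂ)) =
      2 * Complex.I * ∑ t : ZMod n, sawtooth n t * ZMod.stdAddChar (t * j) := by
  set A := ∑ t : ZMod n, sawtooth n t * ZMod.stdAddChar (t * j) with hA
  set w : ℂ := ZMod.stdAddChar j with hw
  have hw1 : w ≠ 1 := by
    intro h
    exact hj (ZMod.injective_stdAddChar (by rw [← hw, h, AddChar.map_zero_eq_one]))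
  have hexp : Complex.exp (2 * Real.pi * Complex.I * ((j.val / n : ℝ) : ℂ)) = w := by
    have := ZMod.stdAddChar_coe (N := n) (j.val : ℤ)
    rw [Int.cast_natCast, ZMod.natCast_zmod_val] at this
    rw [hw, this]
    push_cast
    congr 1
    ring
  have hshift : A * w = ∑ t : ZMod n, sawtooth n (t - 1) * ZMod.stdAddChar (t * j) := by
    rw [hA, Finset.sum_mul]
    refine Fintype.sum_equiv (Equiv.addRight 1) _ _ fun t => ?_
    simp only [Equiv.coe_addRight, add_sub_cancel_right, add_mul, one_mul, AddChar.map_add_eq_mul]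
    ring
  have hsum : ∑ t : ZMod n, (ZMod.stdAddChar (t * j) : ℂ) = 0 := by
    rw [AddChar.sum_mulShift j (ZMod.isPrimitive_stdAddChar n), if_neg hj, Nat.cast_zero]
  have hrec : A * w - A = 1 / 2 + 1 / 2 * w := by
    rw [hshift, hA, ← Finset.sum_sub_distrib]
    simp_rw [← sub_mul, sawtooth_sub_one_sub hn, add_mul, Finset.sum_add_distrib, ← Finset.mul_sum,
      hsum, ite_mul, zero_mul]
    simp [hw]
  have hA' : A = (w + 1) / (2 * (w - 1)) := by
    rw [eq_div_iff (mul_ne_zero two_ne_zero (sub_ne_zero.mpr hw1))]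
    linear_combination 2 * hrec
  rw [Complex.cot_pi_eq_exp_ratio, hexp, hA']
  have h1 : w - 1 ≠ 0 := sub_ne_zero.mpr hw1
  have h2 : 1 - w ≠ 0 := sub_ne_zero.mpr hw1.symm
  field_simp
  rw [Complex.I_sq]
  ring

theorem DirichletCharacter.sum_mul_eq_sum_units {n : ℕ} [NeZero n] (χ : DirichletCharacter ℂ n)
    (F : ZMod n → ℂ) : ∑ j : ZMod n, χ j * F j = ∑ h : (ZMod n)ˣ, χ h * F h := by
  refine (Fintype.sum_of_injective (fun h : (ZMod n)ˣ => (h : ZMod n)) Units.val_injective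
    _ _ (fun j hj => ?_) fun h => rfl).symm
  rw [χ.map_nonunit fun ⟨u, hu⟩ => hj ⟨u, hu⟩, zero_mul]

theorem DirichletCharacter.inv_apply_unit {n : ℕ} (χ : DirichletCharacter ℂ n)
    (h : (ZMod n)ˣ) : χ⁻¹ (h : ZMod n) = χ ((h⁻¹ : (ZMod n)ˣ) : ZMod n) := by
  rw [MulChar.inv_apply, Ring.inverse_unit]

theorem DirichletCharacter.odd_inv {n : ℕ} {χ : DirichletCharacter ℂ n} (hχ : χ.Odd) :
    (χ⁻¹).Odd := by
  have h := χ.inv_apply_unit (-1)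
  rwa [inv_neg, inv_one, Units.val_neg, Units.val_one, hχ] at h

/-- Some twisted sum of sawtooth values of an odd character is nonzero, since `L(1, χ⁻¹) ≠ 0`. -/
theorem exists_sum_char_mul_sawtooth_ne_zero {n : ℕ} [NeZero n] (hn : 2 < n)
    {χ : DirichletCharacter ℂ n} (hχ : χ.Odd) :
    ∃ t : ZMod n, ∑ h : (ZMod n)ˣ, χ h * sawtooth n (h * t) ≠ 0 := by
  have : Fact (1 < n) := ⟨by omega⟩
  by_contra! hall
  have hodd : (χ⁻¹).Odd := DirichletCharacter.odd_inv hχ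
  have hne : χ⁻¹ ≠ 1 := by
    rintro h
    rw [h, DirichletCharacter.Odd, MulChar.one_apply isUnit_one.neg] at hodd
    norm_num at hodd
  apply DirichletCharacter.LFunction_apply_one_ne_zero hne
  have hterm : ∀ j : ZMod n, χ⁻¹ j * HurwitzZeta.hurwitzZetaOdd (ZMod.toAddCircle j) 1 =
      χ⁻¹ j * (Real.pi * Complex.I *
        ∑ t : ZMod n, sawtooth n t * ZMod.stdAddChar (t * j)) := by
    intro j
    rcases eq_or_ne j 0 with rfl | hj
    · rw [MulChar.map_zero, zero_mul, zero_mul]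
    · have hpos : 0 < j.val := Nat.pos_of_ne_zero ((ZMod.val_ne_zero j).mpr hj)
      have hn0 : (0 : ℝ) < n := by exact_mod_cast NeZero.pos n
      rw [ZMod.toAddCircle_apply, hurwitzZetaOdd_one ⟨by positivity, by
        rw [div_lt_one hn0]; exact_mod_cast j.val_lt⟩, cot_eq_sum_sawtooth (by omega) hj]
      ring
  rw [DirichletCharacter.LFunction, ZMod.LFunction_def_odd hodd.to_fun,
    Finset.sum_congr rfl fun j _ => hterm j, DirichletCharacter.sum_mul_eq_sum_units]
  have hre : ∀ h : (ZMod n)ˣ, ∑ t : ZMod n, sawtooth n t * ZMod.stdAddChar (t * (h : ZMod n)) =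
      ∑ u : ZMod n, sawtooth n (((h⁻¹ : (ZMod n)ˣ) : ZMod n) * u) * ZMod.stdAddChar u := by
    intro h
    refine Fintype.sum_equiv h.mulRight _ _ fun t => ?_
    simp [mul_comm t]
  have hzero : ∑ h : (ZMod n)ˣ, χ⁻¹ (h : ZMod n) * (Real.pi * Complex.I *
      ∑ t : ZMod n, sawtooth n t * ZMod.stdAddChar (t * (h : ZMod n))) = 0 := by
    calc _ = Real.pi * Complex.I * ∑ u : ZMod n, (∑ h : (ZMod n)ˣ,
          χ ((h⁻¹ : (ZMod n)ˣ) : ZMod n) * sawtooth n (((h⁻¹ : (ZMod n)ˣ) : ZMod n) * u)) *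
            ZMod.stdAddChar u := by
          simp_rw [hre, DirichletCharacter.inv_apply_unit, Finset.sum_mul, Finset.mul_sum]
          rw [Finset.sum_comm]
          refine Finset.sum_congr rfl fun u _ => Finset.sum_congr rfl fun h _ => ?_
          ring
      _ = 0 := by
          have : ∀ u : ZMod n, ∑ h : (ZMod n)ˣ, χ ((h⁻¹ : (ZMod n)ˣ) : ZMod n) *
              sawtooth n (((h⁻¹ : (ZMod n)ˣ) : ZMod n) * u) = 0 := fun u =>
            (Equiv.sum_comp (Equiv.inv (ZMod n)ˣ) fun h : (ZMod n)ˣ =>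
              χ h * sawtooth n (h * u)).trans (hall u)
          simp only [this, zero_mul, Finset.sum_const_zero, mul_zero]
  rw [hzero, mul_zero]

/-- The odd functions on `(ℤ/n)ˣ`. -/
def oddFunctions (n : ℕ) : Submodule ℂ ((ZMod n)ˣ → ℂ) where
  carrier := {f | Function.Odd f}
  add_mem' hf hg := hf.add hg
  zero_mem' := fun _ => by simp
  smul_mem' c _ hf := hf.const_smul c

theorem mem_oddFunctions {n : ℕ} {f : (ZMod n)ˣ → ℂ} :
    f ∈ oddFunctions n ↔ ∀ g, f (-g) = -f g := Iff.rfl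

/-- The even functions on `(ℤ/n)ˣ`. -/
def evenFunctions (n : ℕ) : Submodule ℂ ((ZMod n)ˣ → ℂ) where
  carrier := {f | Function.Even f}
  add_mem' hf hg := hf.add hg
  zero_mem' := fun _ => by simp
  smul_mem' c _ hf := hf.const_smul c

theorem mem_evenFunctions {n : ℕ} {f : (ZMod n)ˣ → ℂ} :
    f ∈ evenFunctions n ↔ ∀ g, f (-g) = f g := Iff.rfl

theorem finrank_evenFunctions_eq_finrank_oddFunctions {n : ℕ} [NeZero n] (hn : 2 < n) :
    Module.finrank ℂ (evenFunctions n) = Module.finrank ℂ (oddFunctions n) := by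
  let M : ((ZMod n)ˣ → ℂ) ≃ₗ[ℂ] ((ZMod n)ˣ → ℂ) := LinearEquiv.piCongrRight fun g =>
    LinearEquiv.smulOfNeZero ℂ ℂ (sawtooth n g) (sawtooth_unit_ne_zero hn g)
  have hM : ∀ f g, M f g = sawtooth n g * f g := fun f g => rfl
  have hmap : (evenFunctions n).map (M : ((ZMod n)ˣ → ℂ) →ₗ[ℂ] ((ZMod n)ˣ → ℂ))
      = oddFunctions n := by
    ext f
    rw [Submodule.mem_map_equiv]
    obtain ⟨f, rfl⟩ := M.surjective f
    rw [LinearEquiv.symm_apply_apply, mem_evenFunctions, mem_oddFunctions]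
    refine forall_congr' fun g => ?_
    rw [hM, hM, Units.val_neg, sawtooth_neg, neg_mul, neg_inj,
      mul_right_inj' (sawtooth_unit_ne_zero hn g)]
  rw [← hmap, LinearEquiv.finrank_map_eq]

theorem finrank_oddFunctions {n : ℕ} [NeZero n] (hn : 2 < n) :
    Module.finrank ℂ (oddFunctions n) = n.totient / 2 := by
  let P : ((ZMod n)ˣ → ℂ) →ₗ[ℂ] ((ZMod n)ˣ → ℂ) :=
    LinearMap.id - LinearMap.funLeft ℂ ℂ fun g : (ZMod n)ˣ => -g
  have hP : ∀ f g, P f g = f g - f (-g) := fun f g => rfl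
  have hker : LinearMap.ker P = evenFunctions n := by
    ext f
    rw [LinearMap.mem_ker, mem_evenFunctions, funext_iff]
    refine forall_congr' fun g => ?_
    rw [hP, Pi.zero_apply, sub_eq_zero, eq_comm]
  have hrange : LinearMap.range P = oddFunctions n := by
    ext f
    rw [LinearMap.mem_range, mem_oddFunctions]
    constructor
    · rintro ⟨f, rfl⟩ g
      rw [hP, hP, neg_neg, neg_sub]
    · intro hf
      refine ⟨(1 / 2 : ℂ) • f, funext fun g => ?_⟩
      rw [hP, Pi.smul_apply, Pi.smul_apply, hf, smul_eq_mul, smul_eq_mul]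
      ring
  have h := LinearMap.finrank_range_add_finrank_ker P
  rw [hker, hrange, finrank_evenFunctions_eq_finrank_oddFunctions hn,
    Module.finrank_fintype_fun_eq_card, ZMod.card_units_eq_totient] at h
  omega

theorem span_sawtooth_eq_oddFunctions {n : ℕ} [NeZero n] (hn : 2 < n) :
    Submodule.span ℂ (Set.range fun (t : ZMod n) (g : (ZMod n)ˣ) => sawtooth n (g * t)) =
      oddFunctions n := by
  set U := Submodule.span ℂ
    (Set.range fun (t : ZMod n) (g : (ZMod n)ˣ) => sawtooth n (g * t)) with hU
  have hchar : ∀ χ : DirichletCharacter ℂ n, χ.Odd → (fun g : (ZMod n)ˣ => χ g) ∈ U := by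
    intro χ hχ
    have hodd : (χ⁻¹).Odd := DirichletCharacter.odd_inv hχ
    obtain ⟨t, ht⟩ := exists_sum_char_mul_sawtooth_ne_zero hn hodd
    set c := ∑ h : (ZMod n)ˣ, χ⁻¹ h * sawtooth n (h * t) with hc
    have hmem : ∑ h : (ZMod n)ˣ, χ⁻¹ (h : ZMod n) •
        (fun g : (ZMod n)ˣ => sawtooth n (g * (h * t))) ∈ U :=
      Submodule.sum_mem _ fun h _ => Submodule.smul_mem _ _ (Submodule.subset_span ⟨h * t, rfl⟩)
    have heq : ∑ h : (ZMod n)ˣ, χ⁻¹ (h : ZMod n) •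
        (fun g : (ZMod n)ˣ => sawtooth n (g * (h * t))) = c • fun g : (ZMod n)ˣ => χ g := by
      funext g
      rw [Finset.sum_apply, Pi.smul_apply, smul_eq_mul, hc, Finset.sum_mul]
      refine Fintype.sum_equiv (Equiv.mulLeft g) _ _ fun h => ?_
      simp only [Pi.smul_apply, smul_eq_mul, Equiv.coe_mulLeft, Units.val_mul, map_mul,
        DirichletCharacter.inv_apply_unit, ← mul_assoc]
      have : χ ((g⁻¹ : (ZMod n)ˣ) : ZMod n) * χ g = 1 := by
        rw [← map_mul, Units.inv_mul, map_one]
      linear_combination -(χ ((h⁻¹ : (ZMod n)ˣ) : ZMod n) * sawtooth n (g * h * t)) * this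
    rw [heq] at hmem
    exact (Submodule.smul_mem_iff _ ht).mp hmem
  apply le_antisymm
  · rw [hU, Submodule.span_le]
    rintro _ ⟨t, rfl⟩ g
    simp only [Units.val_neg, neg_mul, sawtooth_neg]
  · intro f hf
    rw [mem_oddFunctions] at hf
    have hφ : (n.totient : ℂ) ≠ 0 := by
      exact_mod_cast (Nat.totient_pos.mpr (NeZero.pos n)).ne'
    have hexpand : (n.totient : ℂ) • f = ∑ χ : DirichletCharacter ℂ n,
        (∑ a : (ZMod n)ˣ, f a * χ ((a : ZMod n)⁻¹)) • fun g : (ZMod n)ˣ => χ g := by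
      funext g
      simp only [Finset.sum_apply, Pi.smul_apply, smul_eq_mul, Finset.sum_mul]
      rw [Finset.sum_comm]
      simp_rw [mul_assoc, ← Finset.mul_sum,
        DirichletCharacter.sum_char_inv_mul_char_eq ℂ (Units.isUnit _), Units.val_inj]
      simp [mul_comm]
    rw [← Submodule.smul_mem_iff U hφ, hexpand]
    refine Submodule.sum_mem _ fun χ _ => ?_
    rcases χ.even_or_odd with hχ | hχ
    · have hcoef : ∑ a : (ZMod n)ˣ, f a * χ ((a : ZMod n)⁻¹) = 0 := by
        rw [← self_eq_neg, ← Finset.sum_neg_distrib]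
        refine Fintype.sum_equiv (Equiv.neg _) _ _ fun a => ?_
        rw [Equiv.neg_apply, hf, ZMod.inv_coe_unit, ZMod.inv_coe_unit, inv_neg, Units.val_neg,
          hχ.eval_neg]
        ring
      rw [hcoef, zero_smul]
      exact U.zero_mem
    · exact U.smul_mem _ (hchar χ hχ)

theorem dim_span_stickelberger (n : ℕ) [NeZero n] (hn : 2 < n) :
    Module.finrank ℂ
      (Submodule.span ℂ (Set.range fun t : ZMod n => stickelberger n t))
      = n.totient / 2 := by
  let e : MonoidAlgebra ℂ (ZMod n)ˣ ≃ₗ[ℂ] ((ZMod n)ˣ → ℂ) :=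
    (MonoidAlgebra.coeffLinearEquiv ℂ).trans (Finsupp.linearEquivFunOnFinite ℂ ℂ _)
  have he : ∀ t, e (stickelberger n t) = fun g : (ZMod n)ˣ => sawtooth n (g * t) := by
    intro t
    funext g
    have hcoeff : e (stickelberger n t) g = (stickelberger n t).coeff g := rfl
    rw [hcoeff, stickelberger, MonoidAlgebra.coeff_sum, Finset.sum_apply']
    simp only [MonoidAlgebra.coeff_single, Finsupp.single_apply, B1_natCast_div]
    simp
  rw [← LinearEquiv.finrank_map_eq e, Submodule.map_span, ← Set.range_comp,
    ← finrank_oddFunctions hn, ← span_sawtooth_eq_oddFunctions hn]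
  exact congrArg (fun F : ZMod n → (ZMod n)ˣ → ℂ =>
    Module.finrank ℂ (Submodule.span ℂ (Set.range F))) (funext he)
end

section
/- Let p, q be integers greater than 1, and let Δ ⊂ ℝ^5 be the convex hull of the six points (0,0,0,0,0), (0,0,1,0,0), (1,0,0,0,0), (1,0,1,p,0), (0,1,0,0,0), (0,1,1,0,q). Then Δ is a 5-dimensional empty lattice simplex (its only lattice points are its vertices), but the group ℤ^6/(ℤ(v₁,1)+…+ℤ(v₆,1)) is isomorphic to ℤ/pℤ × ℤ/qℤ, hence not cyclic when gcd(p,q) > 1. -/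
/-- A point of the convex hull of a finite family is a convex combination of that family. -/
theorem exists_weights_of_mem_convexHull_range {ι E : Type*} [Fintype ι] [AddCommGroup E]
    [Module ℝ E] {v : ι → E} {x : E} (hx : x ∈ convexHull ℝ (Set.range v)) :
    ∃ w : ι → ℝ, (∀ i, 0 ≤ w i) ∧ ∑ i, w i = 1 ∧ ∑ i, w i • v i = x := by
  classical
  have hv : Set.range v =
      Fintype.linearCombination ℝ v '' Set.range fun i j : ι => if i = j then (1 : ℝ) else 0 := by
    rw [← Set.range_comp]
    congr 1
    ext i
    simp [Fintype.linearCombination_apply]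
  rw [hv, ← LinearMap.image_convexHull, convexHull_basis_eq_stdSimplex] at hx
  obtain ⟨w, ⟨hw₀, hw₁⟩, rfl⟩ := hx
  exact ⟨w, hw₀, hw₁, by simp [Fintype.linearCombination_apply]⟩

/-- The product `ZMod p × ZMod q` is not cyclic unless `p` and `q` are coprime. -/
theorem ZMod.not_isAddCyclic_prod {p q : ℕ} (h : 1 < Nat.gcd p q) :
    ¬ IsAddCyclic (ZMod p × ZMod q) := by
  rw [AddGroup.isAddCyclic_prod_iff, Nat.card_zmod, Nat.card_zmod]
  rintro ⟨-, -, hpq⟩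
  exact h.ne' hpq

/-- The vertices of the counterexample simplex. -/
def simplexVertex (p q : ℕ) : Fin 6 → Fin 5 → ℤ :=
  ![![0,0,0,0,0], ![0,0,1,0,0], ![1,0,0,0,0], ![1,0,1,(p : ℤ),0],
    ![0,1,0,0,0], ![0,1,1,0,(q : ℤ)]]

/-- A combination of the vertices of the simplex, in coordinates. -/
theorem sum_smul_simplexVertex (p q : ℕ) (w : Fin 6 → ℝ) :
    ∑ i, w i • (fun j => (simplexVertex p q i j : ℝ)) =
      ![w 2 + w 3, w 4 + w 5, w 1 + w 3 + w 5, w 3 * p, w 5 * q] := by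
  ext j
  fin_cases j <;> simp [Fin.sum_univ_six, simplexVertex]

theorem affineIndependent_simplexVertex {p q : ℕ} (hp : p ≠ 0) (hq : q ≠ 0) :
    AffineIndependent ℝ (fun i => fun j => (simplexVertex p q i j : ℝ)) := by
  rw [affineIndependent_iff_of_fintype]
  intro w hw hsum
  rw [Finset.weightedVSub_eq_linear_combination _ hw, sum_smul_simplexVertex] at hsum
  have h0 := congrFun hsum 0
  have h1 := congrFun hsum 1
  have h2 := congrFun hsum 2
  have h3 : w 3 = 0 := by simpa [hp] using congrFun hsum 3
  have h5 : w 5 = 0 := by simpa [hq] using congrFun hsum 4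
  simp [h3, h5] at h0 h1 h2
  simp [Fin.sum_univ_six, h0, h1, h2, h3, h5] at hw
  intro i
  fin_cases i <;> assumption

/-- The simplex is empty: its only lattice points are its vertices. -/
theorem eq_simplexVertex_of_mem_convexHull {p q : ℕ} {x : Fin 5 → ℤ}
    (hx : (fun j => (x j : ℝ)) ∈
      convexHull ℝ (Set.range fun i => fun j => (simplexVertex p q i j : ℝ))) :
    ∃ i, x = simplexVertex p q i := by
  obtain ⟨w, hw, hsum, hwx⟩ := exists_weights_of_mem_convexHull_range hx
  rw [sum_smul_simplexVertex] at hwx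
  have h0 : w 2 + w 3 = x 0 := congrFun hwx 0
  have h1 : w 4 + w 5 = x 1 := congrFun hwx 1
  have h2 : w 1 + w 3 + w 5 = x 2 := congrFun hwx 2
  have h3 : w 3 * p = x 3 := congrFun hwx 3
  have h4 : w 5 * q = x 4 := congrFun hwx 4
  rw [Fin.sum_univ_six] at hsum
  have w0 := hw 0
  have w1 := hw 1
  have w2 := hw 2
  have w3 := hw 3
  have w4 := hw 4
  have w5 := hw 5
  have x0 : 0 ≤ x 0 := by
    have : (0 : ℝ) ≤ x 0 := by linarith
    exact_mod_cast this
  have x1 : 0 ≤ x 1 := by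
    have : (0 : ℝ) ≤ x 1 := by linarith
    exact_mod_cast this
  have x2 : 0 ≤ x 2 := by
    have : (0 : ℝ) ≤ x 2 := by linarith
    exact_mod_cast this
  have x01 : x 0 + x 1 ≤ 1 := by
    have : (x 0 + x 1 : ℝ) ≤ 1 := by linarith
    exact_mod_cast this
  have x2' : x 2 ≤ 1 := by
    have : (x 2 : ℝ) ≤ 1 := by linarith
    exact_mod_cast this
  have hcases : (x 0 = 0 ∧ x 1 = 0 ∨ x 0 = 1 ∧ x 1 = 0 ∨ x 0 = 0 ∧ x 1 = 1) ∧
      (x 2 = 0 ∨ x 2 = 1) := by omega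
  -- In every case the weights at `3` and `5` are determined, and hence so are `x 3` and `x 4`.
  have key (i : Fin 6) (e0 : x 0 = simplexVertex p q i 0) (e1 : x 1 = simplexVertex p q i 1)
      (e2 : x 2 = simplexVertex p q i 2)
      (e3 : w 3 * p = simplexVertex p q i 3) (e4 : w 5 * q = simplexVertex p q i 4) :
      ∃ i, x = simplexVertex p q i := by
    refine ⟨i, funext fun j => ?_⟩
    rw [h3] at e3
    rw [h4] at e4
    fin_cases j
    exacts [e0, e1, e2, by exact_mod_cast e3, by exact_mod_cast e4]
  obtain ⟨⟨a, b⟩ | ⟨a, b⟩ | ⟨a, b⟩, c | c⟩ := hcases <;>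
    rw [a] at h0 <;> rw [b] at h1 <;> rw [c] at h2 <;> push_cast at h0 h1 h2
  · have h3 : w 3 = 0 := by linarith
    have h5 : w 5 = 0 := by linarith
    apply key 0 <;> simp [simplexVertex, *]
  · have h3 : w 3 = 0 := by linarith
    have h5 : w 5 = 0 := by linarith
    apply key 1 <;> simp [simplexVertex, *]
  · have h3 : w 3 = 0 := by linarith
    have h5 : w 5 = 0 := by linarith
    apply key 2 <;> simp [simplexVertex, *]
  · have h3 : w 3 = 1 := by linarith
    have h5 : w 5 = 0 := by linarith
    apply key 3 <;> simp [simplexVertex, *]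
  · have h3 : w 3 = 0 := by linarith
    have h5 : w 5 = 0 := by linarith
    apply key 4 <;> simp [simplexVertex, *]
  · have h3 : w 3 = 0 := by linarith
    have h5 : w 5 = 1 := by linarith
    apply key 5 <;> simp [simplexVertex, *]

/-- The vertices of the simplex placed at height one. -/
def liftedVertex (p q : ℕ) (i : Fin 6) : Fin 6 → ℤ :=
  fun j => if h : (j : ℕ) < 5 then simplexVertex p q i ⟨j, h⟩ else 1

/-- An integer combination of the lifted vertices, in coordinates. -/
theorem sum_smul_liftedVertex (p q : ℕ) (c : Fin 6 → ℤ) :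
    ∑ i, c i • liftedVertex p q i =
      ![c 2 + c 3, c 4 + c 5, c 1 + c 3 + c 5, c 3 * p, c 5 * q,
        c 0 + c 1 + c 2 + c 3 + c 4 + c 5] := by
  ext j
  fin_cases j <;> simp [Fin.sum_univ_six, liftedVertex, simplexVertex]

/-- The span of the lifted vertices is cut out by two congruences. -/
theorem mem_span_liftedVertex {p q : ℕ} {y : Fin 6 → ℤ} :
    y ∈ Submodule.span ℤ (Set.range (liftedVertex p q)) ↔ (p : ℤ) ∣ y 3 ∧ (q : ℤ) ∣ y 4 := by
  simp only [Submodule.mem_span_range_iff_exists_fun, sum_smul_liftedVertex]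
  constructor
  · rintro ⟨c, rfl⟩
    exact ⟨Dvd.intro_left (c 3) rfl, Dvd.intro_left (c 5) rfl⟩
  · rintro ⟨⟨k, hk⟩, l, hl⟩
    refine ⟨![y 5 - y 0 - y 1 - y 2 + k + l, y 2 - k - l, y 0 - k, k, y 1 - l, l], ?_⟩
    ext j
    fin_cases j <;> simp [hk, hl] <;> ring

/-- The quotient of `ℤ^6` by the lifted vertices, computed by the fourth and fifth coordinates. -/
noncomputable def quotientSpanLiftedVertexEquiv (p q : ℕ) :
    ((Fin 6 → ℤ) ⧸ Submodule.span ℤ (Set.range (liftedVertex p q))) ≃ₗ[ℤ] ZMod p × ZMod q :=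
  let f : (Fin 6 → ℤ) →ₗ[ℤ] ZMod p × ZMod q :=
    (((Int.castAddHom (ZMod p)).toIntLinearMap ∘ₗ LinearMap.proj 3).prod
      ((Int.castAddHom (ZMod q)).toIntLinearMap ∘ₗ LinearMap.proj 4))
  have hker : Submodule.span ℤ (Set.range (liftedVertex p q)) = LinearMap.ker f := by
    ext y
    simp [mem_span_liftedVertex, f, ZMod.intCast_zmod_eq_zero_iff_dvd]
  have hsurj : Function.Surjective f := by
    rintro ⟨a, b⟩
    obtain ⟨a, rfl⟩ := ZMod.intCast_surjective a
    obtain ⟨b, rfl⟩ := ZMod.intCast_surjective b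
    exact ⟨![0, 0, 0, a, b, 0], rfl⟩
  (Submodule.quotEquivOfEq _ _ hker).trans (f.quotKerEquivOfSurjective hsurj)

/-- The counterexample simplex: for integers `p, q > 1`, the convex hull `Δ ⊂ ℝ^5` of
`(0,0,0,0,0), (0,0,1,0,0), (1,0,0,0,0), (1,0,1,p,0), (0,1,0,0,0), (0,1,1,0,q)` is a
`5`-dimensional empty lattice simplex, yet `ℤ^6/(ℤ(v₁,1)+…+ℤ(v₆,1)) ≅ ℤ/p × ℤ/q`,
which is not cyclic when `gcd(p,q) > 1`. -/
theorem counterexample_simplex (p q : ℕ) (hp : 1 < p) (hq : 1 < q) :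
    let v : Fin 6 → Fin 5 → ℤ :=
      ![![0,0,0,0,0], ![0,0,1,0,0], ![1,0,0,0,0], ![1,0,1,(p : ℤ),0],
        ![0,1,0,0,0], ![0,1,1,0,(q : ℤ)]]
    AffineIndependent ℝ (fun i => fun j => (v i j : ℝ)) ∧
    (∀ x : Fin 5 → ℤ,
      (fun j => (x j : ℝ)) ∈ convexHull ℝ (Set.range fun i => fun j => (v i j : ℝ)) →
      ∃ i, x = v i) ∧
    Nonempty (((Fin 6 → ℤ) ⧸
        Submodule.span ℤ (Set.range fun i => fun j : Fin 6 =>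
          if h : (j : ℕ) < 5 then v i ⟨j, h⟩ else 1)) ≃+ (ZMod p × ZMod q)) ∧
    (1 < Nat.gcd p q →
      ¬ IsAddCyclic ((Fin 6 → ℤ) ⧸
        Submodule.span ℤ (Set.range fun i => fun j : Fin 6 =>
          if h : (j : ℕ) < 5 then v i ⟨j, h⟩ else 1))) := by
  intro v
  have e := (quotientSpanLiftedVertexEquiv p q).toAddEquiv
  exact ⟨affineIndependent_simplexVertex (by omega) (by omega),
    fun _ hx => eq_simplexVertex_of_mem_convexHull hx, ⟨e⟩,
    fun h hcyc => ZMod.not_isAddCyclic_prod h (e.isAddCyclic.mp hcyc)⟩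
end

section
/- Let C^{2d}/μ_n be an isolated cyclic quotient singularity of type (a₁/n,…,a_{2d}/n), i.e., gcd(aᵢ,n) = 1 for all i. If the minimal log-discrepancy min_{t=1,…,n-1} ∑_{i=1}^{2d}{t·aᵢ/n} is at least d, then after a permutation of the indices, a_{2i-1} ≡ -a_{2i} (mod n) for all i = 1,…,d. -/
open Filter Topology Asymptotics Set

/-- The generating series of a periodic function is a rational function. -/
lemma hasSum_periodic_mul_pow {N : ℕ} [NeZero N] (Φ : ZMod N → ℂ) {x : ℂ} (hx : ‖x‖ < 1) :
    HasSum (fun m : ℕ ↦ Φ m * x ^ m) ((∑ j, Φ j * x ^ j.val) / (1 - x ^ N)) := by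
  have hsum : Summable fun m : ℕ ↦ Φ m * x ^ m := by
    refine Summable.of_norm_bounded (g := fun m ↦ (∑ j, ‖Φ j‖) * ‖x‖ ^ m)
      ((summable_geometric_of_lt_one (norm_nonneg x) hx).mul_left _) fun m ↦ ?_
    rw [norm_mul, norm_pow]
    gcongr
    exact Finset.single_le_sum (f := fun j ↦ ‖Φ j‖) (fun j _ ↦ norm_nonneg _) (Finset.mem_univ _)
  have hrange : ∑ m ∈ Finset.range N, Φ m * x ^ m = ∑ j : ZMod N, Φ j * x ^ j.val := by
    refine Finset.sum_nbij' (fun m ↦ (m : ZMod N)) ZMod.val (by simp)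
      (fun j _ ↦ Finset.mem_range.mpr j.val_lt)
      (fun m hm ↦ ZMod.val_cast_of_lt (Finset.mem_range.mp hm)) (by simp) fun m hm ↦ ?_
    rw [ZMod.val_cast_of_lt (Finset.mem_range.mp hm)]
  have hne : 1 - x ^ N ≠ 0 := by
    intro h
    have : ‖x‖ ^ N = 1 := by rw [← norm_pow, ← sub_eq_zero.mp h, norm_one]
    exact (pow_lt_one₀ (norm_nonneg x) hx (NeZero.ne N)).ne this
  have hsplit := hsum.sum_add_tsum_nat_add N
  rw [hrange] at hsplit
  have hshift : ∑' m : ℕ, Φ (m + N : ℕ) * x ^ (m + N) = x ^ N * ∑' m : ℕ, Φ m * x ^ m := by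
    rw [← tsum_mul_left]
    refine tsum_congr fun m ↦ ?_
    simp [pow_add]
    ring
  rw [hshift] at hsplit
  have hval : ∑' m : ℕ, Φ m * x ^ m = (∑ j, Φ j * x ^ j.val) / (1 - x ^ N) := by
    rw [eq_div_iff hne]
    linear_combination -hsplit
  exact hval ▸ hsum.hasSum

lemma isBigO_exp_neg_mul_sub_one_add (u : ℝ) :
    (fun t : ℝ ↦ ((Real.exp (-u * t) - 1 + u * t : ℝ) : ℂ)) =O[𝓝 0] fun t ↦ t ^ 2 := by
  have htend : Tendsto (fun t : ℝ ↦ ‖-u * t‖) (𝓝 0) (𝓝 0) := by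
    have : Continuous fun t : ℝ ↦ ‖-u * t‖ := by fun_prop
    simpa using this.tendsto 0
  refine IsBigO.of_bound (u ^ 2) ?_
  filter_upwards [htend.eventually_le_const one_pos] with t ht
  rw [Complex.norm_real]
  have h := Real.norm_exp_sub_one_sub_id_le ht
  rw [show Real.exp (-u * t) - 1 + u * t = Real.exp (-u * t) - 1 - -u * t by ring]
  simpa [mul_pow] using h

/-- The value at `0` of the L-function of a function on `ZMod N` with vanishing sum. -/
theorem ZMod.LFunction_apply_zero_of_sum_eq_zero {N : ℕ} [NeZero N] {Φ : ZMod N → ℂ}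
    (h0 : Φ 0 = 0) (hΦ : ∑ j, Φ j = 0) :
    ZMod.LFunction Φ 0 = -(∑ j, Φ j * (j.val : ℂ)) / N := by
  have hN : (N : ℂ) ≠ 0 := NeZero.ne _
  set c : ℂ := -(∑ j, Φ j * (j.val : ℂ)) / N with hc
  let num : ℝ → ℂ := fun t ↦ ∑ j, Φ j * (Real.exp (-(j.val : ℝ) * t) : ℂ)
  let den : ℝ → ℂ := fun t ↦ 1 - (Real.exp (-(N : ℝ) * t) : ℂ)
  let F : ℝ → ℂ := fun t ↦ num t / den t - c * (Real.exp (-1 * t) : ℂ)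
  have hden_ne : ∀ t ∈ Ioi (0 : ℝ), den t ≠ 0 := by
    intro t ht
    have hlt : Real.exp (-(N : ℝ) * t) < 1 := by
      rw [Real.exp_lt_one_iff]
      have : (0 : ℝ) < N := Nat.cast_pos.mpr (NeZero.pos N)
      nlinarith [mul_pos this ht]
    have : (1 - Real.exp (-(N : ℝ) * t) : ℝ) ≠ 0 := by linarith
    simp only [den]
    exact_mod_cast this
  have hcont : ContinuousOn F (Ioi 0) := by
    have hnum : Continuous num := by fun_prop
    have hden : Continuous den := by fun_prop
    exact (hnum.continuousOn.div hden.continuousOn hden_ne).sub (by fun_prop)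
  have htop : F =O[atTop] fun t ↦ Real.exp (-1 * t) := by
    have hexp : ∀ u : ℝ, 1 ≤ u →
        (fun t : ℝ ↦ (Real.exp (-u * t) : ℂ)) =O[atTop] fun t ↦ Real.exp (-1 * t) := by
      intro u hu
      refine IsBigO.of_bound 1 ?_
      filter_upwards [eventually_ge_atTop 0] with t ht
      rw [Complex.norm_real, Real.norm_eq_abs, Real.norm_eq_abs, Real.abs_exp, Real.abs_exp,
        one_mul, Real.exp_le_exp]
      nlinarith
    have hnum : num =O[atTop] fun t ↦ Real.exp (-1 * t) := by
      refine IsBigO.fun_sum (s := Finset.univ)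
        (A := fun j t ↦ Φ j * (Real.exp (-(j.val : ℝ) * t) : ℂ)) fun j _ ↦ ?_
      rcases eq_or_ne j 0 with rfl | hj
      · simp only [h0, zero_mul]
        exact isBigO_zero _ _
      · refine (hexp _ ?_).const_mul_left _
        exact_mod_cast Nat.one_le_iff_ne_zero.mpr ((ZMod.val_ne_zero j).mpr hj)
    have hden : Tendsto den atTop (𝓝 1) := by
      have h : Tendsto (fun t : ℝ ↦ Real.exp (-(N : ℝ) * t)) atTop (𝓝 0) := by
        refine Real.tendsto_exp_atBot.comp (tendsto_id.const_mul_atTop_of_neg ?_)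
        simpa using NeZero.pos N
      simpa [den] using ((Complex.continuous_ofReal.tendsto 0).comp h).const_sub (1 : ℂ)
    have hinv : (fun t ↦ (den t)⁻¹) =O[atTop] fun _ ↦ (1 : ℝ) :=
      (hden.inv₀ one_ne_zero).isBigO_one ℝ
    have hdiv := hnum.mul hinv
    simp only [mul_one, ← div_eq_mul_inv] at hdiv
    exact hdiv.sub ((hexp 1 le_rfl).const_mul_left c)
  have hbot : F =O[𝓝[>] 0] fun t ↦ t ^ (-(-1 : ℝ)) := by
    have hE := isBigO_exp_neg_mul_sub_one_add
    have hnum : (fun t ↦ num t - c * (Real.exp (-1 * t) : ℂ) * den t) =O[𝓝 0]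
        fun t : ℝ ↦ t ^ 2 := by
      have h := (IsBigO.fun_sum (s := Finset.univ) fun (j : ZMod N) _ ↦
        (hE j.val).const_mul_left (Φ j)).sub
        (((hE 1).sub (hE (N + 1))).const_mul_left c)
      refine h.congr_left fun t ↦ ?_
      have hexp : Real.exp (-((N : ℝ) + 1) * t) =
          Real.exp (-1 * t) * Real.exp (-(N : ℝ) * t) := by
        rw [← Real.exp_add]; ring_nf
      have hsum : ∑ j, Φ j * ((Real.exp (-(j.val : ℝ) * t) - 1 + j.val * t : ℝ) : ℂ) =
          num t - ∑ j, Φ j + t * ∑ j, Φ j * (j.val : ℂ) := by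
        simp only [num]
        rw [Finset.mul_sum, ← Finset.sum_sub_distrib, ← Finset.sum_add_distrib]
        refine Finset.sum_congr rfl fun j _ ↦ ?_
        push_cast
        ring
      have hcN : ∑ j, Φ j * (j.val : ℂ) = -(c * N) := by
        rw [hc]; field_simp
      rw [hsum, hΦ, hcN, hexp]
      simp only [den]
      push_cast
      ring
    have hden : (fun t : ℝ ↦ t) =O[𝓝 0] den := by
      have hderiv : HasDerivAt den (N : ℂ) 0 := by
        have h : HasDerivAt (fun t : ℝ ↦ Real.exp (-(N : ℝ) * t)) (-N : ℝ) 0 := by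
          simpa using ((hasDerivAt_id (0 : ℝ)).const_mul (-(N : ℝ))).exp
        simpa only [Complex.ofReal_neg, Complex.ofReal_natCast, neg_neg] using
          h.ofReal_comp.const_sub (1 : ℂ)
      simpa [den, Function.comp_def] using (hderiv.isTheta_sub hN).isBigO_symm
    have hdiv := (hnum.mono nhdsWithin_le_nhds).mul
      ((hden.mono nhdsWithin_le_nhds).inv_rev (l := 𝓝[>] (0 : ℝ)) (by
        filter_upwards [self_mem_nhdsWithin] with t ht h
        exact absurd h (ne_of_gt ht)))
    refine hdiv.congr' ?_ ?_
    · filter_upwards [self_mem_nhdsWithin] with t ht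
      have := hden_ne t ht
      simp only [F]
      field_simp
    · filter_upwards [self_mem_nhdsWithin] with t ht
      have : t ≠ 0 := ne_of_gt ht
      rw [neg_neg, Real.rpow_one]
      field_simp
  have hmellin : ∀ s : ℂ, -1 < s.re → DifferentiableAt ℂ (mellin F) s := fun s hs ↦
    mellin_differentiableAt_of_isBigO_rpow_exp one_pos
      (hcont.locallyIntegrableOn measurableSet_Ioi) htop hbot hs
  have hseries : ∀ s : ℂ, 1 < s.re →
      ZMod.LFunction Φ s = c + mellin F s * (Complex.Gamma s)⁻¹ := by
    intro s hs
    have hs0 : 0 < s.re := one_pos.trans hs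
    have hΓ := Complex.Gamma_ne_zero_of_re_pos hs0
    let a : ℕ → ℂ := fun m ↦ Φ m - if m = 1 then c else 0
    have hL : HasSum (fun m : ℕ ↦ Φ m / (m : ℂ) ^ s) (ZMod.LFunction Φ s) := by
      rw [ZMod.LFunction_eq_LSeries Φ hs, LSeries]
      convert (ZMod.LSeriesSummable_of_one_lt_re Φ hs).hasSum using 2 with m
      rw [LSeries.term_def]
      split_ifs with hm <;> simp [hm, h0]
    have ha : HasSum (fun m : ℕ ↦ a m / (m : ℂ) ^ s) (ZMod.LFunction Φ s - c) := by
      have h1 : HasSum (fun m : ℕ ↦ (if m = 1 then c else 0) / (m : ℂ) ^ s) c := by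
        convert hasSum_ite_eq (1 : ℕ) c using 2 with m
        split_ifs with h <;> simp [h]
      simpa only [a, sub_div] using hL.sub h1
    have hM : HasSum (fun m : ℕ ↦ Complex.Gamma s * a m / ((m : ℝ) : ℂ) ^ s) (mellin F s) := by
      refine hasSum_mellin (p := fun m : ℕ ↦ (m : ℝ)) (fun m ↦ ?_) hs0 (fun t ht ↦ ?_) ?_
      · rcases Nat.eq_zero_or_pos m with rfl | hm
        · left; simp [a, h0]
        · right; exact_mod_cast hm
      · have hpow : ∀ m : ℕ, (Real.exp (-(m : ℝ) * t) : ℂ) = (Real.exp (-t) : ℂ) ^ m := by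
          intro m
          rw [← Complex.ofReal_pow, ← Real.exp_nat_mul]
          ring_nf
        have hx : ‖(Real.exp (-t) : ℂ)‖ < 1 := by
          rw [Complex.norm_real, Real.norm_eq_abs, Real.abs_exp, Real.exp_lt_one_iff]
          exact neg_neg_of_pos ht
        have h1 : HasSum (fun m : ℕ ↦ (if m = 1 then c else 0) * (Real.exp (-(m : ℝ) * t) : ℂ))
            (c * (Real.exp (-1 * t) : ℂ)) := by
          convert hasSum_ite_eq (1 : ℕ) (c * (Real.exp (-1 * t) : ℂ)) using 2 with m
          split_ifs with h <;> simp [h]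
        have h2 : HasSum (fun m : ℕ ↦ Φ m * (Real.exp (-(m : ℝ) * t) : ℂ))
            (num t / den t) := by
          simpa only [num, den, hpow] using hasSum_periodic_mul_pow Φ hx
        simpa only [a, sub_mul, F] using h2.sub h1
      · refine ha.summable.norm.congr fun m ↦ ?_
        rcases Nat.eq_zero_or_pos m with rfl | hm
        · simp [a, h0]
        · rw [norm_div, Complex.norm_natCast_cpow_of_pos hm]
    have hM' := ha.mul_left (Complex.Gamma s)
    simp only [Complex.ofReal_natCast, mul_div_assoc] at hM
    rw [hM.unique hM']
    field_simp
    ring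
  have hopen : IsOpen {s : ℂ | -1 < s.re} := isOpen_lt continuous_const Complex.continuous_re
  have hanal₁ : AnalyticOnNhd ℂ (ZMod.LFunction Φ) {s : ℂ | -1 < s.re} :=
    (ZMod.differentiable_LFunction_of_sum_zero hΦ).differentiableOn.analyticOnNhd hopen
  have hanal₂ : AnalyticOnNhd ℂ (fun s ↦ c + mellin F s * (Complex.Gamma s)⁻¹)
      {s : ℂ | -1 < s.re} := by
    refine DifferentiableOn.analyticOnNhd (fun s hs ↦ ?_) hopen
    exact (((hmellin s hs).mul
      (Complex.differentiable_one_div_Gamma s)).const_add c).differentiableWithinAt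
  have heq := hanal₁.eqOn_of_preconnected_of_eventuallyEq hanal₂
    (convex_halfSpace_re_gt (-1)).isPreconnected (z₀ := 2) (by simp; norm_num)
    (by
      filter_upwards [(isOpen_lt continuous_const Complex.continuous_re).mem_nhds
        (show (1 : ℝ) < (2 : ℂ).re by simp)] with s hs using hseries s hs)
  simpa [Complex.Gamma_zero] using heq (show (0 : ℂ) ∈ {s : ℂ | -1 < s.re} by simp)

/-- Generalized Bernoulli numbers `B_{1,χ}` of odd primitive Dirichlet characters do not vanish. -/
theorem DirichletCharacter.sum_mul_val_ne_zero {N : ℕ} [NeZero N] {χ : DirichletCharacter ℂ N}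
    (hχ : χ.IsPrimitive) (hodd : χ.Odd) : ∑ j, χ⁻¹ j * (j.val : ℂ) ≠ 0 := by
  have hne : χ ≠ 1 := by
    rintro rfl
    exact DirichletCharacter.Odd.not_even 1 hodd (MulChar.one_apply_coe (-1))
  have hN : N ≠ 1 := fun h ↦ hne (χ.level_one' h)
  have hodd' : χ⁻¹.Odd := by
    rw [DirichletCharacter.Odd, MulChar.inv_apply_eq_inv', hodd, inv_neg_one]
  have h1 : χ.completedLFunction 1 ≠ 0 := by
    have h := DirichletCharacter.LFunction_apply_one_ne_zero hne
    rw [DirichletCharacter.LFunction_eq_completed_div_gammaFactor χ 1 (.inr hN)] at h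
    exact (div_ne_zero_iff.mp h).1
  have h0 : χ⁻¹.completedLFunction 0 ≠ 0 := by
    have h := hχ.completedLFunction_one_sub 0
    rw [sub_zero] at h
    exact right_ne_zero_of_mul (h ▸ h1)
  have hL : χ⁻¹.LFunction 0 ≠ 0 := by
    rw [DirichletCharacter.LFunction_eq_completed_div_gammaFactor _ 0 (.inr hN),
      hodd'.gammaFactor_def, zero_add, Complex.Gammaℝ_one, div_one]
    exact h0
  intro h
  refine hL ?_
  rw [DirichletCharacter.LFunction, ZMod.LFunction_apply_zero_of_sum_eq_zero
    (χ⁻¹.map_zero' hN) (MulChar.sum_eq_zero_of_ne_one (inv_ne_one.mpr hne)), h]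
  simp

/-- If all sums `∑ i, {t * a i / n}` with `t ≠ 0` agree, then `∑ i, χ (a i)` vanishes for every odd
Dirichlet character `χ` modulo `n`. -/
theorem DirichletCharacter.Odd.sum_apply_eq_zero {n : ℕ} [NeZero n] {ι : Type*} [Fintype ι]
    {a : ι → ZMod n} (ha : ∀ i, IsUnit (a i)) {c : ℕ}
    (hval : ∀ t : ZMod n, t ≠ 0 → ∑ i, (t * a i).val = c)
    {χ : DirichletCharacter ℂ n} (hχ : χ.Odd) : ∑ i, χ (a i) = 0 := by
  obtain ⟨k, hk⟩ := χ.conductor_dvd_level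
  have : NeZero χ.conductor := ⟨χ.conductor_ne_zero⟩
  have hk0 : 0 < k := Nat.pos_of_ne_zero fun h ↦ NeZero.ne n (by rw [hk, h, mul_zero])
  have hlevel := χ.conductor_dvd_level
  set ψ := χ.primitiveCharacter with hψ
  let b : ι → ZMod χ.conductor := fun i ↦ (a i).cast
  have hχψ : ∀ u : ZMod n, IsUnit u → χ u = ψ u.cast := by
    rintro _ ⟨u, rfl⟩
    rw [← DirichletCharacter.changeLevel_eq_cast_of_dvd ψ hlevel u, hψ,
      χ.changeLevel_primitiveCharacter]
  have hb : ∀ i, IsUnit (b i) := fun i ↦ (ha i).map (ZMod.castHom hlevel (ZMod χ.conductor))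
  have hψodd : ψ.Odd := by
    have h := hχψ (-1) isUnit_one.neg
    rw [hχ, ← ZMod.castHom_apply (h := hlevel), map_neg, map_one] at h
    exact h.symm
  have hψne : ψ ≠ 1 := by
    intro h
    rw [h] at hψodd
    exact DirichletCharacter.Odd.not_even 1 hψodd (MulChar.one_apply_coe (-1))
  have hcond : χ.conductor ≠ 1 := fun h ↦ hψne (ψ.level_one' h)
  have hsum : ∀ s : ZMod χ.conductor, s ≠ 0 → k * ∑ i, (s * b i).val = c := by
    intro s hs
    have hlt : k * s.val < n := by
      have h := Nat.mul_lt_mul_of_pos_left s.val_lt hk0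
      rwa [mul_comm k χ.conductor, ← hk] at h
    rw [← hval ((k * s.val : ℕ) : ZMod n), Finset.mul_sum]
    · refine Finset.sum_congr rfl fun i _ ↦ ?_
      have h1 : s * b i = ((s.val * (a i).val : ℕ) : ZMod χ.conductor) := by
        simp only [b, Nat.cast_mul, ZMod.natCast_val, ZMod.cast_id', id]
      have h2 : ((k * s.val : ℕ) : ZMod n) * a i = ((k * (s.val * (a i).val) : ℕ) : ZMod n) := by
        push_cast
        rw [ZMod.natCast_zmod_val (a i), mul_assoc]
      rw [h1, h2, ZMod.val_natCast, ZMod.val_natCast, ← Nat.mul_mod_mul_left]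
      congr 1
      rw [mul_comm, ← hk]
    · rw [Ne, ZMod.natCast_eq_zero_iff]
      refine Nat.not_dvd_of_pos_of_lt ?_ hlt
      exact Nat.mul_pos hk0 (Nat.pos_of_ne_zero ((ZMod.val_ne_zero s).mpr hs))
  have hzero : ∑ s, ψ⁻¹ s * ∑ i, ((s * b i).val : ℂ) = 0 := by
    have h : ∀ s, ψ⁻¹ s * ∑ i, ((s * b i).val : ℂ) = ψ⁻¹ s * (c / k) := by
      intro s
      rcases eq_or_ne s 0 with rfl | hs
      · simp [ψ⁻¹.map_zero' hcond]
      · have hk' : (k : ℂ) ≠ 0 := Nat.cast_ne_zero.mpr hk0.ne'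
        rw [← hsum s hs]
        push_cast
        field_simp
    rw [Finset.sum_congr rfl fun s _ ↦ h s, ← Finset.sum_mul,
      MulChar.sum_eq_zero_of_ne_one (inv_ne_one.mpr hψne), zero_mul]
  have hfactor : ∀ i, ∑ s, ψ⁻¹ s * ((s * b i).val : ℂ) =
      ψ (b i) * ∑ s, ψ⁻¹ s * (s.val : ℂ) := by
    intro i
    obtain ⟨u, hu⟩ := hb i
    rw [← hu, Finset.mul_sum,
      ← Equiv.sum_comp u.mulRight (fun s ↦ ψ u * (ψ⁻¹ s * (s.val : ℂ)))]
    refine Finset.sum_congr rfl fun s _ ↦ ?_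
    have h : ψ u * ψ⁻¹ u = 1 := by
      rw [← MulChar.mul_apply, mul_inv_cancel, MulChar.one_apply_coe]
    simp only [Units.mulRight_apply, map_mul]
    linear_combination (-ψ⁻¹ s * ((s * u).val : ℂ)) * h
  simp_rw [Finset.mul_sum] at hzero
  rw [Finset.sum_comm, Finset.sum_congr rfl fun i _ ↦ hfactor i, ← Finset.sum_mul] at hzero
  rw [Finset.sum_congr rfl fun i _ ↦ hχψ _ (ha i)]
  exact (mul_eq_zero.mp hzero).resolve_right
    (DirichletCharacter.sum_mul_val_ne_zero χ.primitiveCharacter_isPrimitive hψodd)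

/-- A family of units modulo `n` on which all odd characters sum to zero is symmetric. -/
theorem ZMod.card_filter_eq_neg_of_sum_odd_eq_zero {n : ℕ} [NeZero n] {ι : Type*} [Fintype ι]
    {a : ι → ZMod n} (ha : ∀ i, IsUnit (a i))
    (hodd : ∀ χ : DirichletCharacter ℂ n, χ.Odd → ∑ i, χ (a i) = 0) (b : ZMod n) :
    ({i | a i = b} : Finset ι).card = ({i | a i = -b} : Finset ι).card := by
  by_cases hb : IsUnit b
  swap
  · have hb' : ¬IsUnit (-b) := fun h ↦ hb (by simpa using h.neg)
    rw [Finset.filter_false_of_mem fun i _ (h : a i = b) ↦ hb (h ▸ ha i),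
      Finset.filter_false_of_mem fun i _ (h : a i = -b) ↦ hb' (h ▸ ha i)]
  have key : ∀ u : ZMod n, IsUnit u →
      (n.totient : ℂ) * ({i | a i = u} : Finset ι).card =
        ∑ χ : DirichletCharacter ℂ n, χ u⁻¹ * ∑ i, χ (a i) := by
    intro u hu
    simp_rw [Finset.mul_sum]
    rw [Finset.sum_comm, Finset.sum_congr rfl fun i _ ↦
      DirichletCharacter.sum_char_inv_mul_char_eq ℂ hu (a i), Finset.sum_ite]
    simp [eq_comm, mul_comm]
  have hneg : (-b)⁻¹ = -b⁻¹ := by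
    refine ZMod.inv_eq_of_mul_eq_one n _ _ ?_
    rw [neg_mul_neg, ZMod.mul_inv_of_unit b hb]
  have htot : (n.totient : ℂ) ≠ 0 :=
    Nat.cast_ne_zero.mpr (Nat.totient_pos.mpr (NeZero.pos n)).ne'
  have h : (n.totient : ℂ) * ({i | a i = b} : Finset ι).card =
      n.totient * ({i | a i = -b} : Finset ι).card := by
    rw [key b hb, key (-b) hb.neg, hneg]
    refine Finset.sum_congr rfl fun χ _ ↦ ?_
    rcases χ.even_or_odd with hχ | hχ
    · rw [hχ.eval_neg]
    · rw [hodd χ hχ, mul_zero, mul_zero]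
  exact_mod_cast mul_left_cancel₀ htot h

/-- Two finite families with equally many members over each value agree up to reindexing. -/
lemma exists_equiv_of_card_fiber_eq {ι κ γ : Type*} [Fintype ι] [Fintype κ] [DecidableEq γ]
    {f : ι → γ} {g : κ → γ}
    (h : ∀ c, ({i | f i = c} : Finset ι).card = ({k | g k = c} : Finset κ).card) :
    ∃ e : ι ≃ κ, ∀ i, g (e i) = f i := by
  have hE : ∀ c, Nonempty ({i // f i = c} ≃ {k // g k = c}) := fun c ↦
    Fintype.card_eq.mp (by rw [Fintype.card_subtype, Fintype.card_subtype, h c])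
  let E : ∀ c, {i // f i = c} ≃ {k // g k = c} := fun c ↦ (hE c).some
  refine ⟨(Equiv.sigmaFiberEquiv f).symm.trans
    ((Equiv.sigmaCongrRight E).trans (Equiv.sigmaFiberEquiv g)), fun i ↦ ?_⟩
  exact (E (f i) ⟨i, rfl⟩).2

/-- A symmetric family without self-opposite members can be arranged in opposite pairs. -/
theorem exists_perm_apply_eq_neg {G : Type*} [InvolutiveNeg G] [LinearOrder G] {d : ℕ}
    {a : Fin (2 * d) → G} (hne : ∀ i, a i ≠ -a i)
    (hcard : ∀ c, ({i | a i = c} : Finset (Fin (2 * d))).card =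
      ({i | a i = -c} : Finset (Fin (2 * d))).card) :
    ∃ σ : Equiv.Perm (Fin (2 * d)), ∀ i : Fin d,
      a (σ ⟨2 * i + 1, by omega⟩) = -a (σ ⟨2 * i, by omega⟩) := by
  let P := {i // a i < -a i}
  let g : P × Fin 2 → G := fun x ↦ if x.2 = 0 then a x.1 else -a x.1
  obtain ⟨e, he⟩ : ∃ e : P × Fin 2 ≃ Fin (2 * d), ∀ x, a (e x) = g x := by
    refine exists_equiv_of_card_fiber_eq fun c ↦ ?_
    have hsplit : ({x | g x = c} : Finset (P × Fin 2)).card =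
        ({i | a i < -a i ∧ a i = c} : Finset (Fin (2 * d))).card +
          ({i | a i < -a i ∧ a i = -c} : Finset (Fin (2 * d))).card := by
      simp only [Finset.card_filter, Fintype.sum_prod_type, Fin.sum_univ_two, g,
        Finset.sum_add_distrib, neg_eq_iff_eq_neg, ite_and, if_true, one_ne_zero, if_false]
      rw [← Finset.sum_filter (fun i ↦ a i < -a i), ← Finset.sum_filter (fun i ↦ a i < -a i)]
      congr 1 <;>
        exact (Finset.sum_subtype _ (p := fun i ↦ a i < -a i) (by simp)
          fun i ↦ if a i = _ then 1 else 0).symm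
    have hempty : ∀ b, ¬b < -b →
        ({i | a i < -a i ∧ a i = b} : Finset (Fin (2 * d))).card = 0 := by
      intro b hb
      rw [Finset.card_eq_zero, Finset.filter_eq_empty_iff]
      rintro i - ⟨h, rfl⟩
      exact hb h
    have hfull : ∀ b, b < -b → ({i | a i < -a i ∧ a i = b} : Finset (Fin (2 * d))).card =
        ({i | a i = b} : Finset (Fin (2 * d))).card := by
      intro b hb
      refine congrArg _ (Finset.filter_congr fun i _ ↦ and_iff_right_of_imp ?_)
      rintro rfl
      exact hb
    rw [hsplit]
    rcases lt_trichotomy c (-c) with hc | hc | hc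
    · rw [hfull c hc, hempty (-c) (by rw [neg_neg]; exact hc.not_gt), add_zero]
    · rw [hempty c hc.not_lt, hempty (-c) (by rw [neg_neg]; exact hc.not_gt), eq_comm,
        Finset.card_eq_zero, Finset.filter_eq_empty_iff]
      rintro i - rfl
      exact hne i hc
    · rw [hempty c hc.not_gt, hfull (-c) (by rwa [neg_neg]), zero_add, hcard c]
  have hP : Fintype.card P = d := by
    have h := Fintype.card_congr e
    simp only [Fintype.card_prod, Fintype.card_fin] at h
    omega
  let pairing : Fin (2 * d) ≃ Fin d × Fin 2 := (finCongr (mul_comm 2 d)).trans finProdFinEquiv.symm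
  let σ := pairing.trans (((Fintype.equivFinOfCardEq hP).symm.prodCongr (Equiv.refl _)).trans e)
  have hσ : ∀ (i : Fin d) (r : Fin 2) (h : 2 * (i : ℕ) + r < 2 * d),
      a (σ ⟨2 * i + r, h⟩) = g ((Fintype.equivFinOfCardEq hP).symm i, r) := by
    intro i r h
    have : pairing ⟨2 * i + r, h⟩ = (i, r) := by
      rw [← Equiv.eq_symm_apply]
      ext
      simp [pairing, finProdFinEquiv, add_comm]
    simp [σ, this, he]
  refine ⟨σ, fun i ↦ ?_⟩
  have h0 := hσ i 0 (by simp)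
  have h1 := hσ i 1 (by simp; omega)
  simp only [Fin.val_zero, Fin.val_one, add_zero] at h0 h1
  rw [h0, h1]
  simp [g]

lemma Int.fract_intCast_div_natCast_eq_val (n : ℕ) [NeZero n] (k : ℤ) :
    Int.fract ((k : ℝ) / n) = ((k : ZMod n).val : ℝ) / n := by
  rw [Int.fract_div_intCast_eq_div_intCast_mod, ← ZMod.val_intCast, Int.cast_natCast]

/-- If the isolated cyclic quotient singularity of type `(a₁/n, …, a_{2d}/n)`
(`gcd(aᵢ, n) = 1`) has minimal log-discrepancy at least `d`, then after a permutation of the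
indices `a_{2i-1} ≡ -a_{2i} (mod n)` for all `i = 1, …, d`. -/
theorem paired_of_mld_ge_d (d n : ℕ) (hd : 1 ≤ d) (hn : 1 ≤ n) (a : Fin (2*d) → ℤ)
    (hcop : ∀ i, Int.gcd (a i) n = 1)
    (hmld : ∀ t : ℕ, 1 ≤ t → t ≤ n - 1 →
      (d : ℝ) ≤ ∑ i, Int.fract ((((t : ℤ) * a i : ℤ) : ℝ) / (n : ℝ))) :
    ∃ σ : Equiv.Perm (Fin (2*d)), ∀ i : Fin d,
      (n : ℤ) ∣ (a (σ ⟨2*(i : ℕ), by omega⟩) + a (σ ⟨2*(i : ℕ)+1, by omega⟩)) := by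
  have : NeZero n := ⟨by omega⟩
  let A : Fin (2 * d) → ZMod n := fun i ↦ (a i : ZMod n)
  have hA : ∀ i, IsUnit (A i) := fun i ↦
    (ZMod.coe_int_isUnit_iff_isCoprime _ _).mpr (Int.isCoprime_iff_gcd_eq_one.mpr (hcop i)).symm
  suffices h : ∃ σ : Equiv.Perm (Fin (2 * d)), ∀ i : Fin d,
      A (σ ⟨2 * i + 1, by omega⟩) = -A (σ ⟨2 * i, by omega⟩) by
    obtain ⟨σ, hσ⟩ := h
    refine ⟨σ, fun i ↦ ?_⟩
    rw [← ZMod.intCast_zmod_eq_zero_iff_dvd, Int.cast_add]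
    exact (congrArg _ (hσ i)).trans (add_neg_cancel _)
  by_cases h2 : n ∣ 2
  · have hunit : ∀ x y : ZMod n, IsUnit x → IsUnit y → x = -y := by
      rcases (Nat.dvd_prime Nat.prime_two).mp h2 with rfl | rfl
      · exact fun _ _ _ _ ↦ Subsingleton.elim _ _
      · decide
    exact ⟨Equiv.refl _, fun i ↦ hunit _ _ (hA _) (hA _)⟩
  have hle : ∀ t : ZMod n, t ≠ 0 → d * n ≤ ∑ i, (t * A i).val := by
    intro t ht
    have hpos : 0 < t.val := Nat.pos_of_ne_zero ((ZMod.val_ne_zero t).mpr ht)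
    have h := hmld t.val hpos (Nat.le_sub_one_of_lt t.val_lt)
    simp_rw [Int.fract_intCast_div_natCast_eq_val] at h
    rw [← Finset.sum_div, le_div_iff₀ (by exact_mod_cast hn)] at h
    have hcast : ∀ i, (((t.val : ℤ) * a i : ℤ) : ZMod n) = t * A i := by
      intro i
      simp [A]
    simp_rw [hcast] at h
    exact_mod_cast h
  have heq : ∀ t : ZMod n, t ≠ 0 → ∑ i, (t * A i).val = d * n := by
    intro t ht
    have hadd : ∑ i, (t * A i).val + ∑ i, (-t * A i).val = 2 * d * n := by
      rw [← Finset.sum_add_distrib, Finset.sum_congr rfl (g := fun _ ↦ n)]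
      · simp
      · intro i _
        have hne : t * A i ≠ 0 := fun h ↦ ht ((hA i).mul_left_eq_zero.mp h)
        rw [neg_mul, ZMod.neg_val, if_neg hne]
        exact Nat.add_sub_cancel' (ZMod.val_lt _).le
    have h1 := hle t ht
    have h2 := hle (-t) (neg_ne_zero.mpr ht)
    have h3 : 2 * d * n = d * n + d * n := by ring
    omega
  let : LinearOrder (ZMod n) := LinearOrder.lift' ZMod.val (ZMod.val_injective n)
  refine exists_perm_apply_eq_neg (fun i hi ↦ h2 ?_) fun c ↦ ?_
  · have h : (2 : ZMod n) * A i = 0 := by linear_combination hi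
    rw [(hA i).mul_left_eq_zero] at h
    exact (ZMod.natCast_eq_zero_iff 2 n).mp (by exact_mod_cast h)
  · convert ZMod.card_filter_eq_neg_of_sum_odd_eq_zero hA
      (fun χ hχ ↦ hχ.sum_apply_eq_zero hA heq) c
end
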